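/- For every integer d ≥ 2, one has γ(d) < 1, i.e. 2^{d-2} · d² · Γ(d/2)² < (j_{d/2-1, 1})^d. -/

import Mathlib

/-- The Bessel function of the first kind `J_ν`, defined for real order `ν`
by its power series (interpreted with real powers `(x/2)^(2k+ν)`). -/
noncomputable def besselJ (ν x : ℝ) : ℝ :=
  ∑' k : ℕ, (-1 : ℝ) ^ k / (k.factorial * Real.Gamma ((k : ℝ) + ν + 1)) *
    (x / 2) ^ (2 * (k : ℝ) + ν)

/-- `j_{ν,1}`: the smallest positive zero of the Bessel function `J_ν`. -/
noncomputable def besselJZero1 (ν : ℝ) : ℝ := sInf {r : ℝ | 0 < r ∧ besselJ ν r = 0}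

/-- The Pleijel constant `γ(d) = 2^{d-2} d² Γ(d/2)² / (j_{d/2-1,1})^d`. -/
noncomputable def pleijelGamma (d : ℕ) : ℝ :=
  2 ^ ((d : ℝ) - 2) * (d : ℝ) ^ 2 * Real.Gamma ((d : ℝ) / 2) ^ 2 /
    besselJZero1 ((d : ℝ) / 2 - 1) ^ (d : ℝ)

/-!
Writing `J_ν(x) = (x/2)^ν C_ν(-x²/4)` with the Bessel–Clifford function `C_ν`, the function
`y(t) = C_ν(-t)` solves the Sturm–Liouville equation `(t^(ν+1) y')' + t^ν y = 0`. Sturm comparison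
with `t ↦ (s - t) e^{-ct}`, which solves a similar equation with a larger potential when
`s = (ν+1)(ν+5)/4` and `c = 2/(ν+5)`, shows that `y` is positive before `s`, that is,
`j_{ν,1}² ≥ (ν+1)(ν+5)`, provided that the infimum `j_{ν,1}` is not over the empty set; that `y` has
a zero follows from Picone's inequality with the test function `r - t` for `r = (ν+1)(ν+3)`. With
`x = d/2 = ν+1 ≥ 1`, the claim reads `Γ(x+1)² < (j_{ν,1}/2)^{2x}`, and the elementary bound
`Γ(x+1) ≤ ((x+6/5)/2)^x` suffices since `(x+6/5)² < x(x+4)`.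
-/

open Set MeasureTheory
open scoped Nat

section ExponentialGeneratingFunction

variable {𝕜 : Type*} [RCLike 𝕜] {c : ℕ → 𝕜}

lemma summable_mul_pow_div_factorial (hc : BddAbove (range fun k ↦ ‖c k‖)) (x : 𝕜) :
    Summable fun k ↦ c k * x ^ k / k ! := by
  obtain ⟨M, hM⟩ := hc
  refine .of_norm_bounded ((Real.summable_pow_div_factorial ‖x‖).mul_left M) fun k ↦ ?_
  rw [norm_div, norm_mul, norm_pow, RCLike.norm_natCast, mul_div_assoc]
  gcongr
  exact hM (mem_range_self k)

lemma succ_mul_div_factorial_succ {K : Type*} [Field K] [CharZero K] (a : K) (k : ℕ) :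
    ((k + 1 : ℕ) : K) * a / (k + 1)! = a / k ! := by
  rw [Nat.factorial_succ, Nat.cast_mul, mul_div_mul_left _ _ (Nat.cast_ne_zero.mpr k.succ_ne_zero)]

lemma hasDerivAt_tsum_mul_pow_div_factorial (hc : BddAbove (range fun k ↦ ‖c k‖)) (x : 𝕜) :
    HasDerivAt (fun z ↦ ∑' k, c k * z ^ k / k !) (∑' k, c (k + 1) * x ^ k / k !) x := by
  obtain ⟨M, hM⟩ := id hc
  set R := ‖x‖ + 1
  have hbound : Summable fun k : ℕ ↦ M * (k * R ^ (k - 1) / k !) := by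
    refine .mul_left M ((summable_nat_add_iff 1).mp ?_)
    simpa only [Nat.add_sub_cancel, succ_mul_div_factorial_succ]
      using Real.summable_pow_div_factorial R
  have hterm (k : ℕ) (z : 𝕜) (hz : z ∈ Metric.ball 0 R) :
      ‖c k * (k * z ^ (k - 1)) / (k ! : 𝕜)‖ ≤ M * (k * R ^ (k - 1) / k !) := by
    rw [norm_div, norm_mul, norm_mul, norm_pow, RCLike.norm_natCast, RCLike.norm_natCast,
      mul_div_assoc]
    gcongr
    · exact (norm_nonneg _).trans (hM (mem_range_self k))
    · exact hM (mem_range_self k)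
    · exact (mem_ball_zero_iff.mp hz).le
  have hx : x ∈ Metric.ball 0 R := mem_ball_zero_iff.mpr (lt_add_one ‖x‖)
  refine (hasDerivAt_tsum_of_isPreconnected hbound Metric.isOpen_ball
    (convex_ball 0 R).isPreconnected
    (fun k z _ ↦ ((hasDerivAt_pow k z).const_mul (c k)).div_const _) hterm hx
    (summable_mul_pow_div_factorial hc x) hx).congr_deriv ?_
  rw [(Summable.of_norm_bounded hbound (hterm · x hx)).tsum_eq_zero_add]
  simp only [Nat.cast_zero, zero_mul, mul_zero, zero_div, zero_add, Nat.add_sub_cancel,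
    mul_left_comm (c _), succ_mul_div_factorial_succ]

end ExponentialGeneratingFunction

section Gamma

lemma inv_Gamma_eq_mul_inv_Gamma_add_one (s : ℝ) :
    (Real.Gamma s)⁻¹ = s * (Real.Gamma (s + 1))⁻¹ := by
  rcases eq_or_ne s 0 with rfl | hs
  · simp
  · rw [Real.Gamma_add_one hs, mul_inv, mul_inv_cancel_left₀ hs]

lemma bddAbove_range_norm_inv_Gamma_add_nat (s : ℝ) :
    BddAbove (range fun k : ℕ ↦ ‖(Real.Gamma (s + k))⁻¹‖) := by
  refine Filter.IsBoundedUnder.bddAbove_range (Filter.isBoundedUnder_of_eventually_le (a := 1) ?_)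
  filter_upwards [Filter.eventually_ge_atTop ⌈2 - s⌉₊] with k hk
  have hk2 : 2 ≤ s + k := by linarith [Nat.ceil_le.mp hk]
  have hone : 1 ≤ Real.Gamma (s + k) :=
    Real.Gamma_two ▸ Real.Gamma_strictMonoOn_Ici.monotoneOn self_mem_Ici hk2 hk2
  rw [norm_inv, Real.norm_of_nonneg (zero_le_one.trans hone)]
  exact inv_le_one_of_one_le₀ hone

lemma Gamma_le_one {x : ℝ} (hx : x ∈ Icc 1 2) : Real.Gamma x ≤ 1 := by
  simpa only [Real.Gamma_one, Real.Gamma_two, max_self] using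
    Real.convexOn_Gamma.le_max_of_mem_Icc (mem_Ioi.mpr one_pos) (mem_Ioi.mpr two_pos) hx

lemma add_one_mul_rpow_le_rpow_add_one {c x : ℝ} (hc : 0 ≤ c) (hx : 1 ≤ x) :
    (x + 1) * ((x + c) / 2) ^ x ≤ ((x + 1 + c) / 2) ^ (x + 1) := by
  have hxc : 0 < x + c := by linarith
  have hbernoulli : 1 + x * (1 / (x + c)) ≤ (1 + 1 / (x + c)) ^ x :=
    one_add_mul_self_le_rpow_one_add (by linarith [one_div_pos.mpr hxc]) hx
  have hfactor : x + 1 ≤ (1 + x * (1 / (x + c))) * ((x + 1 + c) / 2) := by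
    field_simp
    nlinarith [mul_nonneg hc (sub_nonneg.mpr hx), sq_nonneg c]
  calc (x + 1) * ((x + c) / 2) ^ x
      ≤ (1 + 1 / (x + c)) ^ x * ((x + 1 + c) / 2) * ((x + c) / 2) ^ x := by
        gcongr
        exact hfactor.trans (by gcongr)
    _ = ((1 + 1 / (x + c)) * ((x + c) / 2)) ^ x * ((x + 1 + c) / 2) := by
        rw [Real.mul_rpow (by positivity) (by positivity)]
        ring
    _ = ((x + 1 + c) / 2) ^ (x + 1) := by
        rw [Real.rpow_add_one (by positivity)]
        congr 2
        field_simp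
        ring

lemma Gamma_add_one_le_rpow_of_le_two {x : ℝ} (hx : x ∈ Icc 1 2) :
    Real.Gamma (x + 1) ≤ ((x + 6 / 5) / 2) ^ x :=
  calc Real.Gamma (x + 1)
      = x * Real.Gamma x := Real.Gamma_add_one (by linarith [hx.1])
    _ ≤ x := mul_le_of_le_one_right (by linarith [hx.1]) (Gamma_le_one hx)
    _ ≤ 1 + x * ((x + 6 / 5) / 2 - 1) := by nlinarith [sq_nonneg (x - 7 / 5)]
    _ ≤ (1 + ((x + 6 / 5) / 2 - 1)) ^ x :=
        one_add_mul_self_le_rpow_one_add (by linarith [hx.1]) hx.1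
    _ = ((x + 6 / 5) / 2) ^ x := by rw [add_sub_cancel]

-- Any constant in `[4 - 2√2, √5 - 1)` could replace `6/5`: the lower end comes from the base case
-- `1 ≤ x ≤ 2`, the upper end from requiring `(x + 6/5)² < x (x + 4)` at `x = 1`.
lemma Gamma_add_one_le_rpow {x : ℝ} (hx : 1 ≤ x) :
    Real.Gamma (x + 1) ≤ ((x + 6 / 5) / 2) ^ x := by
  obtain ⟨n, hn⟩ := exists_nat_ge (x - 2)
  induction n generalizing x with
  | zero => exact Gamma_add_one_le_rpow_of_le_two ⟨hx, by simpa using hn⟩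
  | succ n ih =>
    rcases le_total x 2 with hx2 | hx2
    · exact Gamma_add_one_le_rpow_of_le_two ⟨hx, hx2⟩
    obtain ⟨y, rfl⟩ : ∃ y, x = y + 1 := ⟨x - 1, (sub_add_cancel x 1).symm⟩
    have hy : 1 ≤ y := by linarith
    push_cast at hn
    calc Real.Gamma (y + 1 + 1)
        = (y + 1) * Real.Gamma (y + 1) := Real.Gamma_add_one (by positivity)
      _ ≤ (y + 1) * ((y + 6 / 5) / 2) ^ y := by
          gcongr
          exact ih hy (by linarith)
      _ ≤ ((y + 1 + 6 / 5) / 2) ^ (y + 1) :=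
          add_one_mul_rpow_le_rpow_add_one (by norm_num) hy

end Gamma

/-- The Bessel–Clifford function `C_ν`, an entire function of `z` for every real order `ν`. It
strips `J_ν` of its branch point: `J_ν(x) = (x/2)^ν C_ν(-x²/4)`. -/
noncomputable def besselClifford (ν z : ℝ) : ℝ :=
  ∑' k : ℕ, (Real.Gamma (ν + 1 + k))⁻¹ * z ^ k / k !

section BesselClifford

variable {ν : ℝ}

lemma hasSum_besselClifford (ν z : ℝ) :
    HasSum (fun k : ℕ ↦ (Real.Gamma (ν + 1 + k))⁻¹ * z ^ k / k !) (besselClifford ν z) :=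
  (summable_mul_pow_div_factorial (bddAbove_range_norm_inv_Gamma_add_nat (ν + 1)) z).hasSum

lemma hasDerivAt_besselClifford (ν z : ℝ) :
    HasDerivAt (besselClifford ν) (besselClifford (ν + 1) z) z := by
  convert! hasDerivAt_tsum_mul_pow_div_factorial
    (bddAbove_range_norm_inv_Gamma_add_nat (ν + 1)) z using 1
  refine tsum_congr fun k ↦ ?_
  rw [Nat.cast_succ, add_right_comm (ν + 1), add_assoc (ν + 1)]

lemma hasDerivAt_besselClifford_neg (ν t : ℝ) :
    HasDerivAt (fun t ↦ besselClifford ν (-t)) (-besselClifford (ν + 1) (-t)) t :=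
  ((hasDerivAt_besselClifford ν (-t)).comp t (hasDerivAt_neg t)).congr_deriv (mul_neg_one _)

@[fun_prop]
lemma continuous_besselClifford (ν : ℝ) : Continuous (besselClifford ν) :=
  continuous_iff_continuousAt.mpr fun z ↦ (hasDerivAt_besselClifford ν z).continuousAt

lemma besselClifford_zero_pos (hν : -1 < ν) : 0 < besselClifford ν 0 := by
  rw [besselClifford, tsum_eq_single 0 fun k hk ↦ by simp [hk]]
  simpa using Real.Gamma_pos_of_pos (neg_lt_iff_pos_add.mp hν)

lemma besselClifford_eq_add (ν z : ℝ) :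
    besselClifford ν z =
      (ν + 1) * besselClifford (ν + 1) z + z * besselClifford (ν + 1 + 1) z := by
  have hshift : HasSum (fun k : ℕ ↦ k * ((Real.Gamma (ν + 1 + 1 + k))⁻¹ * z ^ k) / k !)
      (z * besselClifford (ν + 1 + 1) z) := by
    rw [← hasSum_nat_add_iff' 1]
    simp only [succ_mul_div_factorial_succ, Finset.range_one, Finset.sum_singleton,
      Nat.cast_zero, zero_mul, zero_div, sub_zero]
    refine ((hasSum_besselClifford (ν + 1 + 1) z).mul_left z).congr_fun fun k ↦ ?_
    push_cast
    ring_nf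
  refine (hasSum_besselClifford ν z).unique
    ((((hasSum_besselClifford (ν + 1) z).mul_left (ν + 1)).add hshift).congr_fun fun k ↦ ?_)
  rw [inv_Gamma_eq_mul_inv_Gamma_add_one, add_right_comm (ν + 1)]
  ring

lemma hasDerivAt_rpow_mul_besselClifford_neg {t : ℝ} (ht : 0 < t) :
    HasDerivAt (fun t ↦ t ^ (ν + 1) * besselClifford (ν + 1) (-t))
      (t ^ ν * besselClifford ν (-t)) t := by
  have h := (Real.hasDerivAt_rpow_const (p := ν + 1) (Or.inl ht.ne')).mul
    (hasDerivAt_besselClifford_neg (ν + 1) t)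
  refine h.congr_deriv ?_
  rw [besselClifford_eq_add ν, add_sub_cancel_right, Real.rpow_add_one ht.ne']
  ring

end BesselClifford

/-- `y` solves the Sturm–Liouville equation `(p y')' + q y = 0` on `(a, b)`, the function `y'` being
its derivative. The solution `y` and its flux `p y'` are required to be continuous up to the end
points, where the equation itself may be singular. -/
structure IsSturmLiouvilleSolution (p q y y' : ℝ → ℝ) (a b : ℝ) : Prop where
  continuousOn : ContinuousOn y (Icc a b)
  continuousOn_flux : ContinuousOn (fun t ↦ p t * y' t) (Icc a b)
  hasDerivAt : ∀ t ∈ Ioo a b, HasDerivAt y (y' t) t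
  hasDerivAt_flux : ∀ t ∈ Ioo a b, HasDerivAt (fun t ↦ p t * y' t) (-(q t * y t)) t

namespace IsSturmLiouvilleSolution

variable {p q Q y y' v v' : ℝ → ℝ} {a b : ℝ}

lemma mono_right {c : ℝ} (hy : IsSturmLiouvilleSolution p q y y' a b) (hcb : c ≤ b) :
    IsSturmLiouvilleSolution p q y y' a c where
  continuousOn := hy.continuousOn.mono (Icc_subset_Icc_right hcb)
  continuousOn_flux := hy.continuousOn_flux.mono (Icc_subset_Icc_right hcb)
  hasDerivAt t ht := hy.hasDerivAt t (Ioo_subset_Ioo_right hcb ht)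
  hasDerivAt_flux t ht := hy.hasDerivAt_flux t (Ioo_subset_Ioo_right hcb ht)

lemma monotoneOn_wronskian (hy : IsSturmLiouvilleSolution p q y y' a b)
    (hv : IsSturmLiouvilleSolution p Q v v' a b) (hqQ : ∀ t ∈ Ioo a b, q t ≤ Q t)
    (hy₀ : ∀ t ∈ Ioo a b, 0 ≤ y t) (hv₀ : ∀ t ∈ Ioo a b, 0 ≤ v t) :
    MonotoneOn (fun t ↦ v t * (p t * y' t) - y t * (p t * v' t)) (Icc a b) := by
  refine monotoneOn_of_hasDerivWithinAt_nonneg (f' := fun t ↦ (Q t - q t) * (y t * v t))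
    (convex_Icc a b) ((hv.continuousOn.mul hy.continuousOn_flux).sub
      (hy.continuousOn.mul hv.continuousOn_flux)) (fun t ht ↦ ?_) (fun t ht ↦ ?_)
  all_goals rw [interior_Icc] at ht
  · have h := ((hv.hasDerivAt t ht).mul (hy.hasDerivAt_flux t ht)).sub
      ((hy.hasDerivAt t ht).mul (hv.hasDerivAt_flux t ht))
    exact (h.congr_deriv (by ring)).hasDerivWithinAt
  · exact mul_nonneg (sub_nonneg.mpr (hqQ t ht)) (mul_nonneg (hy₀ t ht) (hv₀ t ht))

lemma monotoneOn_div (hy : IsSturmLiouvilleSolution p q y y' a b)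
    (hv : IsSturmLiouvilleSolution p Q v v' a b) (hp : ∀ t ∈ Ioo a b, 0 < p t)
    (hqQ : ∀ t ∈ Ioo a b, q t ≤ Q t) (hW : y a * (p a * v' a) ≤ v a * (p a * y' a))
    (hy₀ : ∀ t ∈ Ioo a b, 0 ≤ y t) (hv₀ : ∀ t ∈ Icc a b, 0 < v t) :
    MonotoneOn (fun t ↦ y t / v t) (Icc a b) := by
  have hv₀' : ∀ t ∈ Ioo a b, 0 < v t := fun t ht ↦ hv₀ t (Ioo_subset_Icc_self ht)
  have hmono := hy.monotoneOn_wronskian hv hqQ hy₀ fun t ht ↦ (hv₀' t ht).le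
  refine monotoneOn_of_hasDerivWithinAt_nonneg
    (f' := fun t ↦ (v t * (p t * y' t) - y t * (p t * v' t)) / (p t * v t ^ 2))
    (convex_Icc a b) (hy.continuousOn.div hv.continuousOn fun t ht ↦ (hv₀ t ht).ne')
    (fun t ht ↦ ?_) (fun t ht ↦ ?_)
  all_goals
    rw [interior_Icc] at ht
    have hpt := hp t ht
    have hvt := hv₀' t ht
  · have h := (hy.hasDerivAt t ht).div (hv.hasDerivAt t ht) hvt.ne'
    exact (h.congr_deriv (by field_simp)).hasDerivWithinAt
  · have hab := ht.1.trans ht.2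
    have hWt := hmono (left_mem_Icc.mpr hab.le) (Ioo_subset_Icc_self ht) ht.1.le
    exact div_nonneg ((sub_nonneg.mpr hW).trans hWt) (by positivity)

theorem pos_of_comparison (hy : IsSturmLiouvilleSolution p q y y' a b)
    (hv : IsSturmLiouvilleSolution p Q v v' a b) (hp : ∀ t ∈ Ioo a b, 0 < p t)
    (hqQ : ∀ t ∈ Ioo a b, q t ≤ Q t) (hW : y a * (p a * v' a) ≤ v a * (p a * y' a))
    (hya : 0 < y a) (hv₀ : ∀ t ∈ Icc a b, 0 < v t) {t : ℝ} (ht : t ∈ Icc a b) : 0 < y t := by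
  by_contra! hyt
  obtain ⟨r, ⟨hr, hyr⟩, hmin⟩ : ∃ r, IsLeast (Icc a b ∩ y ⁻¹' Iic 0) r :=
    (isCompact_Icc.of_isClosed_subset
      (hy.continuousOn.preimage_isClosed_of_isClosed isClosed_Icc isClosed_Iic)
      inter_subset_left).exists_isLeast ⟨t, ht, hyt⟩
  have hpos_before : ∀ x ∈ Ioo a r, 0 ≤ y x := fun x hx ↦ by
    by_contra! hyx
    exact hx.2.not_ge (hmin ⟨⟨hx.1.le, hx.2.le.trans hr.2⟩, hyx.le⟩)
  have hsub : Ioo a r ⊆ Ioo a b := Ioo_subset_Ioo_right hr.2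
  have hle : y a / v a ≤ y r / v r :=
    (hy.mono_right hr.2).monotoneOn_div (hv.mono_right hr.2) (fun x hx ↦ hp x (hsub hx))
      (fun x hx ↦ hqQ x (hsub hx)) hW hpos_before (fun x hx ↦ hv₀ x ⟨hx.1, hx.2.trans hr.2⟩)
      (left_mem_Icc.mpr hr.1) (right_mem_Icc.mpr hr.1) hr.1
  have hva := hv₀ a (left_mem_Icc.mpr (hr.1.trans hr.2))
  exact ((div_pos hya hva).trans_le hle).not_ge (div_nonpos_of_nonpos_of_nonneg hyr (hv₀ r hr).le)

theorem sub_le_integral_picone {η η' : ℝ → ℝ} (hy : IsSturmLiouvilleSolution p q y y' a b)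
    (hab : a ≤ b) (hp : ∀ t ∈ Ioo a b, 0 ≤ p t) (hy₀ : ∀ t ∈ Icc a b, 0 < y t)
    (hη : ContinuousOn η (Icc a b)) (hη' : ∀ t ∈ Ioo a b, HasDerivAt η (η' t) t)
    (hint : IntervalIntegrable (fun t ↦ p t * η' t ^ 2 - q t * η t ^ 2) volume a b) :
    η b ^ 2 * (p b * y' b) / y b - η a ^ 2 * (p a * y' a) / y a ≤
      ∫ t in a..b, (p t * η' t ^ 2 - q t * η t ^ 2) := by
  refine intervalIntegral.sub_le_integral_of_hasDeriv_right_of_le hab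
    (g := fun t ↦ η t ^ 2 * (p t * y' t) / y t)
    (g' := fun t ↦ p t * η' t ^ 2 - q t * η t ^ 2 - p t * (η' t - η t * (y' t / y t)) ^ 2)
    (((hη.pow 2).mul hy.continuousOn_flux).div hy.continuousOn fun t ht ↦ (hy₀ t ht).ne')
    (fun t ht ↦ ?_) ((intervalIntegrable_iff_integrableOn_Icc_of_le hab).mp hint) fun t ht ↦ ?_
  · have hyt := hy₀ t (Ioo_subset_Icc_self ht)
    have h := (((hη' t ht).pow 2).mul (hy.hasDerivAt_flux t ht)).div (hy.hasDerivAt t ht) hyt.ne'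
    refine (h.congr_deriv ?_).hasDerivWithinAt
    simp only [Pi.mul_apply, Pi.pow_apply]
    field_simp
    ring
  · exact sub_le_self _ (mul_nonneg (hp t ht) (sq_nonneg _))

end IsSturmLiouvilleSolution

section FirstZero

variable {ν : ℝ}

lemma isSturmLiouvilleSolution_besselClifford_neg (hν : -1 < ν) (r : ℝ) :
    IsSturmLiouvilleSolution (· ^ (ν + 1)) (· ^ ν) (fun t ↦ besselClifford ν (-t))
      (fun t ↦ -besselClifford (ν + 1) (-t)) 0 r where
  continuousOn := by fun_prop
  continuousOn_flux :=
    ((Real.continuous_rpow_const (by linarith)).mul (by fun_prop)).continuousOn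
  hasDerivAt t _ := hasDerivAt_besselClifford_neg ν t
  hasDerivAt_flux t ht := by
    simpa only [mul_neg] using (hasDerivAt_rpow_mul_besselClifford_neg ht.1).fun_neg

-- The two equations force `c = 2 / (ν + 5)` and `s = (ν + 1) (ν + 5) / 4`.
lemma isSturmLiouvilleSolution_sub_mul_exp {c s : ℝ} (hν : -1 < ν) (hs : 2 * c * s = ν + 1)
    (hc : (ν + 3) * c = c ^ 2 * s + 1) (r : ℝ) :
    IsSturmLiouvilleSolution (· ^ (ν + 1)) (fun t ↦ t ^ ν * (1 + c ^ 2 * (s - t)))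
      (fun t ↦ (s - t) * Real.exp (-c * t)) (fun t ↦ -(1 + c * (s - t)) * Real.exp (-c * t))
      0 r where
  continuousOn := by fun_prop
  continuousOn_flux :=
    ((Real.continuous_rpow_const (by linarith)).mul (by fun_prop)).continuousOn
  hasDerivAt t _ := by
    have h := ((hasDerivAt_id' t).const_sub s).mul ((hasDerivAt_id' t).const_mul (-c)).exp
    exact h.congr_deriv (by ring)
  hasDerivAt_flux t ht := by
    have hsub := (hasDerivAt_id' t).const_sub s
    have h := (Real.hasDerivAt_rpow_const (p := ν + 1) (Or.inl ht.1.ne')).mul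
      (((hsub.const_mul c).const_add 1).neg.mul ((hasDerivAt_id' t).const_mul (-c)).exp)
    refine h.congr_deriv ?_
    simp only [Pi.mul_apply, Pi.neg_apply]
    rw [add_sub_cancel_right, Real.rpow_add_one ht.1.ne']
    linear_combination t ^ ν * Real.exp (-c * t) * (hs - (s - t) * hc)

lemma besselClifford_neg_pos {t : ℝ} (hν : -1 < ν) (ht₀ : 0 ≤ t)
    (ht : t < (ν + 1) * (ν + 5) / 4) : 0 < besselClifford ν (-t) := by
  have hν5 : 0 < ν + 5 := by linarith
  refine (isSturmLiouvilleSolution_besselClifford_neg hν t).pos_of_comparison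
    (isSturmLiouvilleSolution_sub_mul_exp (c := 2 / (ν + 5)) (s := (ν + 1) * (ν + 5) / 4) hν
      (by field_simp; ring) (by field_simp; ring) t)
    (fun x hx ↦ Real.rpow_pos_of_pos hx.1 _) (fun x hx ↦ ?_) ?_ ?_ (fun x hx ↦ ?_)
    (right_mem_Icc.mpr ht₀)
  · have hx₀ : 0 ≤ x ^ ν := Real.rpow_nonneg hx.1.le ν
    have hxs : 0 ≤ (ν + 1) * (ν + 5) / 4 - x := by linarith [hx.2]
    exact le_mul_of_one_le_right hx₀ (le_add_of_nonneg_right (by positivity))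
  · simp [Real.zero_rpow (by linarith : ν + 1 ≠ 0)]
  · simpa using besselClifford_zero_pos hν
  · exact mul_pos (by linarith [hx.2]) (Real.exp_pos _)

lemma intervalIntegrable_rpow_sub_rpow_mul_sq (hν : -1 < ν) (r : ℝ) :
    IntervalIntegrable (fun t ↦ t ^ (ν + 1) - t ^ ν * (r - t) ^ 2) volume 0 r :=
  (intervalIntegral.intervalIntegrable_rpow' (by linarith)).sub
    ((intervalIntegral.intervalIntegrable_rpow' hν).mul_continuousOn (by fun_prop))

lemma integral_rpow_sub_rpow_mul_sq {r : ℝ} (hν : -1 < ν) (hr : 0 < r) :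
    ∫ t in (0 : ℝ)..r, (t ^ (ν + 1) - t ^ ν * (r - t) ^ 2) =
      r ^ (ν + 2) / (ν + 2) * (1 - 2 * r / ((ν + 1) * (ν + 3))) := by
  have hν1 : 0 < ν + 1 := by linarith
  have hν3 : 0 < ν + 3 := by linarith
  have hexpand : EqOn (fun t ↦ t ^ (ν + 1) - t ^ ν * (r - t) ^ 2)
      (fun t ↦ (1 + 2 * r) * t ^ (ν + 1) - r ^ 2 * t ^ ν - t ^ (ν + 2)) (uIcc 0 r) := fun t ht ↦ by
    have ht₀ : 0 ≤ t := (uIcc_of_le hr.le ▸ ht).1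
    simp only [show ν + 2 = ν + 1 + 1 by ring, Real.rpow_add_one' ht₀ hν1.ne',
      Real.rpow_add_one' ht₀ (by linarith : ν + 1 + 1 ≠ 0)]
    ring
  have hint {μ : ℝ} (hμ : -1 < μ) : IntervalIntegrable (fun t ↦ t ^ μ) volume 0 r :=
    intervalIntegral.intervalIntegrable_rpow' hμ
  rw [intervalIntegral.integral_congr hexpand,
    intervalIntegral.integral_sub (((hint (by linarith)).const_mul _).sub ((hint hν).const_mul _))
      (hint (by linarith)),
    intervalIntegral.integral_sub ((hint (by linarith)).const_mul _) ((hint hν).const_mul _),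
    intervalIntegral.integral_const_mul, intervalIntegral.integral_const_mul,
    integral_rpow (Or.inl (by linarith)), integral_rpow (Or.inl hν),
    integral_rpow (Or.inl (by linarith))]
  simp only [show ν + 2 = ν + 1 + 1 by ring,
    Real.rpow_add_one hr.ne', Real.zero_rpow hν1.ne',
    Real.zero_rpow (by linarith : ν + 1 + 1 ≠ 0), Real.zero_rpow (by linarith : ν + 1 + 1 + 1 ≠ 0)]
  field_simp
  ring

lemma exists_besselClifford_neg_eq_zero (hν : -1 < ν) :
    ∃ t, 0 < t ∧ besselClifford ν (-t) = 0 := by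
  have hν1 : 0 < ν + 1 := by linarith
  have hν2 : 0 < ν + 2 := by linarith
  have hν3 : 0 < ν + 3 := by linarith
  by_contra! hne
  have hcont : Continuous fun t ↦ besselClifford ν (-t) := by fun_prop
  have hzero : 0 < besselClifford ν (-0) := by simpa using besselClifford_zero_pos hν
  have hpos : ∀ t, 0 ≤ t → 0 < besselClifford ν (-t) := fun t ht ↦ by
    by_contra! hle
    obtain ⟨x, hx, hx0⟩ := intermediate_value_Icc' ht hcont.continuousOn ⟨hle, hzero.le⟩
    rcases hx.1.eq_or_lt with rfl | hxpos
    · exact hzero.ne' hx0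
    · exact hne x hxpos hx0
  set r := (ν + 1) * (ν + 3)
  have hr : 0 < r := by positivity
  have hpicone := (isSturmLiouvilleSolution_besselClifford_neg hν r).sub_le_integral_picone
    (η := fun t ↦ r - t) (η' := fun _ ↦ -1) hr.le (fun t ht ↦ Real.rpow_nonneg ht.1.le _)
    (fun t ht ↦ hpos t ht.1) (by fun_prop) (fun t _ ↦ (hasDerivAt_id' t).const_sub r)
    (by simpa only [even_two, Even.neg_pow, one_pow, mul_one] using
      intervalIntegrable_rpow_sub_rpow_mul_sq hν r)
  simp only [even_two, Even.neg_pow, one_pow, mul_one, integral_rpow_sub_rpow_mul_sq hν hr,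
    sub_self, Real.zero_rpow hν1.ne', ne_eq, OfNat.ofNat_ne_zero, not_false_eq_true, zero_pow,
    zero_mul, mul_zero, zero_div] at hpicone
  refine hpicone.not_gt (mul_neg_of_pos_of_neg (by positivity) ?_)
  rw [mul_div_cancel_right₀ _ hr.ne']
  norm_num

lemma besselJ_eq_rpow_mul_besselClifford (ν : ℝ) {x : ℝ} (hx : 0 < x) :
    besselJ ν x = (x / 2) ^ ν * besselClifford ν (-(x / 2) ^ 2) := by
  have hx2 : 0 < x / 2 := by positivity
  rw [besselJ, besselClifford, ← tsum_mul_left]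
  refine tsum_congr fun k ↦ ?_
  rw [Real.rpow_add hx2, Real.rpow_mul hx2.le, Real.rpow_two, Real.rpow_natCast,
    neg_pow ((x / 2) ^ 2), add_assoc, add_comm (k : ℝ)]
  ring

lemma besselJ_eq_zero_iff {x : ℝ} (hx : 0 < x) :
    besselJ ν x = 0 ↔ besselClifford ν (-(x / 2) ^ 2) = 0 := by
  rw [besselJ_eq_rpow_mul_besselClifford ν hx, mul_eq_zero_iff_left (by positivity)]

lemma exists_besselJ_eq_zero (hν : -1 < ν) : ∃ x, 0 < x ∧ besselJ ν x = 0 := by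
  obtain ⟨t, ht, hzero⟩ := exists_besselClifford_neg_eq_zero hν
  have hsqrt : 0 < 2 * √t := by positivity
  refine ⟨2 * √t, hsqrt, (besselJ_eq_zero_iff hsqrt).mpr ?_⟩
  rwa [mul_div_cancel_left₀ _ two_ne_zero, Real.sq_sqrt ht.le]

lemma sqrt_le_besselJZero1 (hν : -1 < ν) : √((ν + 1) * (ν + 5)) ≤ besselJZero1 ν := by
  refine le_csInf (exists_besselJ_eq_zero hν) fun x ⟨hx, hzero⟩ ↦ ?_
  rw [Real.sqrt_le_left hx.le]
  by_contra! hlt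
  have hpos := besselClifford_neg_pos hν (sq_nonneg (x / 2)) (by linarith)
  exact hpos.ne' ((besselJ_eq_zero_iff hx).mp hzero)

end FirstZero

theorem pleijelGamma_lt_one_general {d : ℝ} (hd : 2 ≤ d) :
    2 ^ (d - 2) * d ^ 2 * Real.Gamma (d / 2) ^ 2 / besselJZero1 (d / 2 - 1) ^ d < 1 := by
  have hzero : d / 2 + 6 / 5 < besselJZero1 (d / 2 - 1) :=
    calc d / 2 + 6 / 5 < √((d / 2 - 1 + 1) * (d / 2 - 1 + 5)) :=
          Real.lt_sqrt_of_sq_lt (by linarith)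
      _ ≤ besselJZero1 (d / 2 - 1) := sqrt_le_besselJZero1 (by linarith)
  have hbase : 0 < d / 2 + 6 / 5 := by linarith
  rw [div_lt_one (Real.rpow_pos_of_pos (hbase.trans hzero) d)]
  calc 2 ^ (d - 2) * d ^ 2 * Real.Gamma (d / 2) ^ 2
      = 2 ^ d * Real.Gamma (d / 2 + 1) ^ 2 := by
        rw [Real.Gamma_add_one (by positivity), Real.rpow_sub two_pos, Real.rpow_two]
        ring
    _ ≤ 2 ^ d * (((d / 2 + 6 / 5) / 2) ^ (d / 2)) ^ 2 := by
        gcongr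
        exact Gamma_add_one_le_rpow (by linarith)
    _ = (d / 2 + 6 / 5) ^ d := by
        rw [← Real.rpow_mul_natCast (by positivity), Nat.cast_ofNat,
          div_mul_cancel₀ d two_ne_zero, ← Real.mul_rpow two_pos.le (by positivity),
          mul_div_cancel₀ _ two_ne_zero]
    _ < besselJZero1 (d / 2 - 1) ^ d := Real.rpow_lt_rpow hbase.le hzero (by linarith)

theorem pleijelGamma_lt_one (d : ℕ) (hd : 2 ≤ d) : pleijelGamma d < 1 :=
  pleijelGamma_lt_one_general (by exact_mod_cast hd)
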